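/- If f : ℕ → ℂ is an MO function, then for every ε > 0 the partial sums satisfy ∑_{n ≤ x} f(n) = Ω(1/(x (log x)^ε)); that is, for each ε > 0 it is NOT the case that there exists a constant C such that |∑_{n ≤ x} f(n)| ≤ C/(x (log x)^ε) for all sufficiently large x. -/

import Mathlib

open Filter Finset

/-- `f` is a multiplicative arithmetical function: `f 1 = 1` and
`f (m*n) = f m * f n` whenever `gcd m n = 1`. -/
def IsMultFn (f : ℕ → ℂ) : Prop :=
  f 1 = 1 ∧ ∀ m n : ℕ, Nat.Coprime m n → f (m * n) = f m * f n

/-- The series `∑_{k=0}^∞ g k` converges (in the sense of partial sums) to `L`. -/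
def SeriesTendsTo (g : ℕ → ℂ) (L : ℂ) : Prop :=
  Filter.Tendsto (fun N => ∑ k ∈ Finset.range N, g k) Filter.atTop (nhds L)

/-- `f` is an MO function: multiplicative, `∑_{n=1}^∞ f n = 0`, and for each prime `p`
the series `∑_{k=0}^∞ f (p^k)` converges to a nonzero value. -/
def IsMO (f : ℕ → ℂ) : Prop :=
  IsMultFn f ∧ SeriesTendsTo (fun n => f (n + 1)) 0 ∧
    ∀ p : ℕ, p.Prime → ∃ L : ℂ, L ≠ 0 ∧ SeriesTendsTo (fun k => f (p ^ k)) L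

/-!
If `‖∑_{n ≤ x} f n‖ ≤ C / (x (log x)^ε)` for large `x`, then differencing gives
`f n = O(1 / (n (log n)^ε))`, and Chebyshev's bound `θ x = O(x)` makes this summable over the prime
powers. For a multiplicative `f`, absolute summability over prime powers already forces absolute
summability over all `n`, so `∑ f n` equals the convergent Euler product `∏_p ∑_k f (p^k)`, which
does not vanish since none of its factors does. This contradicts `∑ f n = 0`.
-/

section EulerProduct

lemma summable_primePow_iff {M : Type*} [AddCommMonoid M] [TopologicalSpace M] {f : ℕ → M} :
    Summable (fun q : {n : ℕ // IsPrimePow n} ↦ f q) ↔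
      Summable fun x : Nat.Primes × ℕ ↦ f (x.1 ^ (x.2 + 1)) :=
  Nat.Primes.prodNatEquiv.summable_iff.symm

lemma summable_pow_of_summable_primePow {E : Type*} [AddCommGroup E] [UniformSpace E]
    [IsUniformAddGroup E] [CompleteSpace E] {f : ℕ → E}
    (hsum : Summable fun q : {n : ℕ // IsPrimePow n} ↦ f q) (p : Nat.Primes) :
    Summable fun k : ℕ ↦ f (p ^ k) :=
  (summable_nat_add_iff 1).mp ((summable_primePow_iff.mp hsum).prod_factor p)

variable {R : Type*} [NormedCommRing R] [NormMulClass R] [NormOneClass R]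
  {f : ArithmeticFunction R}

open Nat in
lemma sum_range_norm_le_prod_primesBelow (hf : f.IsMultiplicative)
    (hsum : ∀ {p : ℕ}, p.Prime → Summable fun k : ℕ ↦ ‖f (p ^ k)‖) (N : ℕ) :
    ∑ n ∈ range N, ‖f n‖ ≤ ∏ p ∈ N.primesBelow, ∑' k : ℕ, ‖f (p ^ k)‖ := by
  have hsmooth : HasSum ((N.smoothNumbers : Set ℕ).indicator (‖f ·‖))
      (∏ p ∈ N.primesBelow, ∑' k : ℕ, ‖f (p ^ k)‖) :=
    hasSum_subtype_iff_indicator.mp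
      (EulerProduct.summable_and_hasSum_smoothNumbers_prod_primesBelow_tsum
        (f := (‖f ·‖)) (by simp [hf.map_one])
        (fun hmn ↦ by rw [hf.map_mul_of_coprime hmn, norm_mul])
        (fun hp ↦ by simpa only [norm_norm] using hsum hp) N).2
  refine (sum_le_sum fun n hn ↦ ?_).trans
    (sum_le_hasSum (range N) (fun n _ ↦ Set.indicator_nonneg (fun _ _ ↦ norm_nonneg _) n) hsmooth)
  rcases n.eq_zero_or_pos with rfl | hn0
  · simpa using Set.indicator_nonneg (fun _ _ ↦ norm_nonneg _) 0
  · rw [Set.indicator_of_mem (mem_smoothNumbers_of_lt hn0 (mem_range.mp hn))]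

theorem summable_norm_of_summable_norm_primePow (hf : f.IsMultiplicative)
    (hsum : Summable fun q : {n : ℕ // IsPrimePow n} ↦ ‖f q‖) : Summable fun n ↦ ‖f n‖ := by
  have hlocal (p : Nat.Primes) : Summable fun k : ℕ ↦ ‖f (p ^ k)‖ :=
    summable_pow_of_summable_primePow (f := fun n ↦ ‖f n‖) hsum p
  set b : ℕ → ℝ := fun p ↦ ∑' k : ℕ, ‖f (p ^ (k + 1))‖
  have hb : ∀ p, 0 ≤ b p := fun p ↦ tsum_nonneg fun k ↦ norm_nonneg _
  have hbsum : Summable fun p : Nat.Primes ↦ b p :=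
    (summable_primePow_iff (f := fun n ↦ ‖f n‖).mp hsum).prod
  have hbsum_le (N : ℕ) : ∑ p ∈ N.primesBelow, b p ≤ ∑' p : Nat.Primes, b p := by
    rw [← sum_subtype_of_mem b fun p hp ↦ Nat.prime_of_mem_primesBelow hp]
    exact Summable.sum_le_tsum (ι := Nat.Primes) _ (fun p _ ↦ hb p) hbsum
  refine summable_of_sum_range_le (c := Real.exp (∑' p : Nat.Primes, b p))
    (fun n ↦ norm_nonneg _) fun N ↦ ?_
  calc ∑ n ∈ range N, ‖f n‖
      ≤ ∏ p ∈ N.primesBelow, ∑' k : ℕ, ‖f (p ^ k)‖ :=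
        sum_range_norm_le_prod_primesBelow hf (fun hp ↦ hlocal ⟨_, hp⟩) N
    _ = ∏ p ∈ N.primesBelow, (1 + b p) := prod_congr rfl fun p hp ↦ by
        rw [(hlocal ⟨p, Nat.prime_of_mem_primesBelow hp⟩).tsum_eq_zero_add, pow_zero, hf.map_one,
          norm_one]
    _ ≤ Real.exp (∑ p ∈ N.primesBelow, b p) := Real.prod_one_add_le_exp_sum _ hb
    _ ≤ Real.exp (∑' p : Nat.Primes, b p) := Real.exp_le_exp.mpr (hbsum_le N)

theorem tsum_ne_zero_of_summable_norm_primePow [CompleteSpace R] (hf : f.IsMultiplicative)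
    (hsum : Summable fun q : {n : ℕ // IsPrimePow n} ↦ ‖f q‖)
    (hne : ∀ p : Nat.Primes, ∑' k : ℕ, f (p ^ k) ≠ 0) : ∑' n, f n ≠ 0 := by
  have hlocal (p : Nat.Primes) : ∑' k : ℕ, f (p ^ k) = 1 + ∑' k : ℕ, f (p ^ (k + 1)) := by
    rw [(summable_pow_of_summable_primePow hsum.of_norm p).tsum_eq_zero_add, pow_zero, hf.map_one]
  have hprod := summable_primePow_iff (f := fun n ↦ ‖f n‖).mp hsum
  rw [← hf.eulerProduct_tprod (summable_norm_of_summable_norm_primePow hf hsum),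
    tprod_congr hlocal]
  refine tprod_one_add_ne_zero_of_summable (fun p ↦ hlocal p ▸ hne p) ?_
  exact hprod.prod.of_nonneg_of_le (fun p ↦ norm_nonneg _)
    fun p ↦ norm_tsum_le_tsum_norm (hprod.prod_factor p)

end EulerProduct

section PrimeSums

open Real

lemma sum_range_mul_nonneg_of_antitone {R : Type*} [Ring R] [PartialOrder R]
    [IsOrderedRing R] {d g : ℕ → R} (hd : ∀ n, 0 ≤ ∑ i ∈ range n, d i) (hg : Antitone g)
    (hg0 : ∀ n, 0 ≤ g n) (n : ℕ) : 0 ≤ ∑ i ∈ range n, g i * d i := by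
  have habel := sum_range_by_parts g d n
  simp only [smul_eq_mul] at habel
  rw [habel, sub_nonneg]
  refine (sum_nonpos fun i _ ↦ ?_).trans (mul_nonneg (hg0 _) (hd _))
  exact mul_nonpos_of_nonpos_of_nonneg (sub_nonpos.mpr (hg i.le_succ)) (hd _)

lemma summable_mul_of_antitone_of_sum_range_le {a g : ℕ → ℝ} {C : ℝ} (ha0 : ∀ n, 0 ≤ a n)
    (ha : ∀ n, ∑ i ∈ range n, a i ≤ C * n) (hg : Antitone g) (hg0 : ∀ n, 0 ≤ g n)
    (hgsum : Summable g) : Summable fun n ↦ g n * a n := by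
  have hC : 0 ≤ C := by simpa using (ha0 0).trans (by simpa using ha 1)
  refine summable_of_sum_range_le (c := C * ∑' n, g n)
    (fun n ↦ mul_nonneg (hg0 n) (ha0 n)) fun n ↦ ?_
  have hcompare : 0 ≤ ∑ i ∈ range n, g i * (C - a i) :=
    sum_range_mul_nonneg_of_antitone (fun n ↦ by simpa [mul_comm] using ha n) hg hg0 n
  calc ∑ i ∈ range n, g i * a i
      ≤ C * ∑ i ∈ range n, g i := by
        simpa only [mul_sub, sum_sub_distrib, ← sum_mul, sub_nonneg, mul_comm C] using hcompare
    _ ≤ C * ∑' n, g n := by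
        gcongr
        exact hgsum.sum_le_tsum _ fun i _ ↦ hg0 i

lemma sum_range_ite_prime_log_le (n : ℕ) :
    ∑ i ∈ range n, (if (i + 2).Prime then log (i + 2 : ℕ) else 0) ≤ 2 * log 4 * n := by
  rcases n.eq_zero_or_pos with rfl | hn
  · simp
  have hn' : (1 : ℝ) ≤ n := by exact_mod_cast hn
  calc ∑ i ∈ range n, (if (i + 2).Prime then log (i + 2 : ℕ) else 0)
      = Chebyshev.theta ((n + 1 : ℕ) : ℝ) := by
        rw [Chebyshev.theta_eq_sum_Icc, Nat.floor_natCast, ← Nat.range_succ_eq_Icc_zero,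
          sum_filter, sum_range_succ', sum_range_succ']
        simp [Nat.not_prime_zero, Nat.not_prime_one, add_assoc, one_add_one_eq_two]
    _ ≤ log 4 * (n + 1 : ℕ) := Chebyshev.theta_le_log4_mul_x (by positivity)
    _ ≤ 2 * log 4 * n := by
        push_cast
        nlinarith [log_nonneg (show (1 : ℝ) ≤ 4 by norm_num)]

theorem summable_primes_mul_log_of_antitoneOn {g : ℕ → ℝ} (hg : AntitoneOn g (Set.Ici 2))
    (hg0 : ∀ n, 0 ≤ g n) (hgsum : Summable g) :
    Summable fun p : Nat.Primes ↦ g p * log p := by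
  have hshift : Summable fun n ↦ g (n + 2) * (if (n + 2).Prime then log (n + 2 : ℕ) else 0) :=
    summable_mul_of_antitone_of_sum_range_le
      (fun n ↦ ite_nonneg (log_natCast_nonneg _) le_rfl)
      sum_range_ite_prime_log_le
      (fun m n hmn ↦ hg (Set.mem_Ici.mpr (by omega)) (Set.mem_Ici.mpr (by omega)) (by omega))
      (fun n ↦ hg0 _) ((summable_nat_add_iff 2).mpr hgsum)
  have hnat := (summable_nat_add_iff 2
    (f := fun n ↦ g n * (if n.Prime then log n else 0))).mp hshift
  refine (hnat.comp_injective Nat.Primes.coe_nat_injective).congr fun p ↦ ?_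
  rw [Function.comp_apply, if_pos p.2]

lemma inv_mul_log_rpow_nonneg (n : ℕ) (s : ℝ) : 0 ≤ ((n : ℝ) * log n ^ s)⁻¹ := by
  have := log_natCast_nonneg n
  positivity

lemma antitoneOn_inv_mul_log_rpow {s : ℝ} (hs : 0 ≤ s) :
    AntitoneOn (fun n : ℕ ↦ ((n : ℝ) * log n ^ s)⁻¹) (Set.Ici 2) := by
  intro m hm n _ hmn
  have hm' : (1 : ℝ) < m := by exact_mod_cast hm
  have hlog : 0 < log m := log_pos hm'
  dsimp only
  gcongr

theorem summable_inv_mul_log_rpow {s : ℝ} (hs : 1 < s) :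
    Summable fun n : ℕ ↦ ((n : ℝ) * log n ^ s)⁻¹ := by
  have hanti := antitoneOn_inv_mul_log_rpow (zero_le_one.trans hs.le)
  rw [← summable_condensed_iff_of_eventually_nonneg]
  · refine ((summable_nat_rpow_inv.mpr hs).mul_right (log 2 ^ s)⁻¹).congr fun k ↦ ?_
    rw [Nat.cast_pow, Nat.cast_ofNat, log_pow, mul_rpow k.cast_nonneg (log_nonneg one_le_two)]
    field_simp
  · exact .of_forall fun n ↦ inv_mul_log_rpow_nonneg n s
  · filter_upwards [eventually_ge_atTop 2] with n hn
    exact hanti hn (Set.mem_Ici.mpr (by omega)) n.le_succ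

theorem summable_primes_inv_mul_log_rpow {ε : ℝ} (hε : 0 < ε) :
    Summable fun p : Nat.Primes ↦ ((p : ℝ) * log p ^ ε)⁻¹ := by
  have hsum := summable_primes_mul_log_of_antitoneOn
    (antitoneOn_inv_mul_log_rpow (s := 1 + ε) (by linarith))
    (fun n ↦ inv_mul_log_rpow_nonneg n _)
    (summable_inv_mul_log_rpow (by linarith))
  refine hsum.congr fun p ↦ ?_
  have hlog : 0 < log p := log_pos (by exact_mod_cast p.2.one_lt)
  rw [rpow_add hlog, rpow_one]
  field_simp

theorem summable_primePow_inv_mul_log_rpow {ε : ℝ} (hε : 0 < ε) :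
    Summable fun q : {n : ℕ // IsPrimePow n} ↦ ((q : ℝ) * log q ^ ε)⁻¹ := by
  refine (summable_primePow_iff (f := fun n : ℕ ↦ ((n : ℝ) * log n ^ ε)⁻¹)).mpr ?_
  refine ((summable_primes_inv_mul_log_rpow hε).mul_of_nonneg summable_geometric_two
    (fun p ↦ inv_mul_log_rpow_nonneg p ε) (fun k ↦ by positivity)).of_nonneg_of_le
    (fun x ↦ inv_mul_log_rpow_nonneg _ ε) fun ⟨p, k⟩ ↦ ?_
  have hp : (2 : ℝ) ≤ p := by exact_mod_cast p.2.two_le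
  have hlog : 0 < log p := log_pos (by linarith)
  have hpow : (p : ℝ) * 2 ^ k ≤ (p : ℝ) ^ (k + 1) := by
    rw [pow_succ']
    gcongr
  have hlogpow : log p ≤ log ((p : ℝ) ^ (k + 1)) :=
    log_le_log (by linarith) (le_self_pow₀ (by linarith) k.succ_ne_zero)
  calc (((p ^ (k + 1) : ℕ) : ℝ) * log (p ^ (k + 1) : ℕ) ^ ε)⁻¹
      ≤ ((p * 2 ^ k) * log p ^ ε)⁻¹ := by
        rw [Nat.cast_pow]
        gcongr
    _ = ((p : ℝ) * log p ^ ε)⁻¹ * (1 / 2) ^ k := by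
        rw [one_div, inv_pow, ← mul_inv, mul_right_comm]

end PrimeSums

section Differencing

lemma eventually_norm_le_two_mul_of_norm_sum_le {E : Type*} [SeminormedAddCommGroup E]
    {f : ℕ → E} {h : ℝ → ℝ} (hcont : ∀ᶠ x in atTop, ContinuousAt h x)
    (hsum : ∀ᶠ x : ℝ in atTop, ‖∑ n ∈ Icc 1 ⌊x⌋₊, f n‖ ≤ h x) :
    ∀ᶠ n : ℕ in atTop, ‖f n‖ ≤ 2 * h n := by
  obtain ⟨x₀, hx₀⟩ := eventually_atTop.mp hsum
  filter_upwards [tendsto_natCast_atTop_atTop.eventually hcont, eventually_gt_atTop ⌈x₀⌉₊]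
    with n hcontn hn
  obtain ⟨m, rfl⟩ : ∃ m, n = m + 1 := ⟨n - 1, by omega⟩
  have hx₀m : x₀ ≤ m := Nat.ceil_le.mp (by omega)
  have hcurr : ‖∑ i ∈ Icc 1 (m + 1), f i‖ ≤ h (m + 1 : ℕ) := by
    simpa only [Nat.floor_natCast] using hx₀ (m + 1 : ℕ) (by push_cast; linarith)
  have hprev : ‖∑ i ∈ Icc 1 m, f i‖ ≤ h (m + 1 : ℕ) := by
    -- The partial sums are constant on `[m, m + 1)`, so the bound survives the limit `x → m + 1`.
    refine ge_of_tendsto (hcontn.continuousWithinAt (s := Set.Iio ((m + 1 : ℕ) : ℝ))).tendsto ?_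
    filter_upwards [Ico_mem_nhdsLT (show (m : ℝ) < (m + 1 : ℕ) from by simp)] with x hx
    have hfloor : ⌊x⌋₊ = m := (Nat.floor_eq_iff (m.cast_nonneg.trans hx.1)).mpr
      ⟨hx.1, by exact_mod_cast hx.2⟩
    simpa only [hfloor] using hx₀ x (hx₀m.trans hx.1)
  calc ‖f (m + 1)‖ = ‖∑ i ∈ Icc 1 (m + 1), f i - ∑ i ∈ Icc 1 m, f i‖ := by
        rw [sum_Icc_succ_top (by omega), add_sub_cancel_left]
    _ ≤ ‖∑ i ∈ Icc 1 (m + 1), f i‖ + ‖∑ i ∈ Icc 1 m, f i‖ := norm_sub_le _ _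
    _ ≤ 2 * h (m + 1 : ℕ) := by linarith

theorem isBigO_inv_mul_log_rpow_of_norm_sum_le {E : Type*} [SeminormedAddCommGroup E]
    {f : ℕ → E} {C ε : ℝ}
    (hsum : ∀ᶠ x : ℝ in atTop, ‖∑ n ∈ Icc 1 ⌊x⌋₊, f n‖ ≤ C / (x * Real.log x ^ ε)) :
    f =O[atTop] fun n ↦ ((n : ℝ) * Real.log n ^ ε)⁻¹ := by
  have hcont : ∀ᶠ x : ℝ in atTop, ContinuousAt (fun x ↦ C / (x * Real.log x ^ ε)) x := by
    filter_upwards [eventually_gt_atTop 1] with x hx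
    have hlog : 0 < Real.log x := Real.log_pos hx
    have : x * Real.log x ^ ε ≠ 0 := by positivity
    fun_prop (disch := grind)
  refine .of_bound (2 * |C|) ?_
  filter_upwards [eventually_norm_le_two_mul_of_norm_sum_le hcont hsum] with n hn
  calc ‖f n‖ ≤ 2 * (C * ((n : ℝ) * Real.log n ^ ε)⁻¹) := by rwa [← div_eq_mul_inv]
    _ ≤ 2 * |C| * ‖((n : ℝ) * Real.log n ^ ε)⁻¹‖ := by
        rw [mul_assoc, Real.norm_eq_abs, ← abs_mul]
        gcongr
        exact le_abs_self _

end Differencing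

section MO

lemma SeriesTendsTo.tsum_eq {g : ℕ → ℂ} {L : ℂ} (hg : SeriesTendsTo g L) (hsum : Summable g) :
    ∑' n, g n = L :=
  tendsto_nhds_unique hsum.hasSum.tendsto_sum_nat hg

lemma toArithmeticFunction_apply_of_ne_zero {R : Type*} [Zero R] (f : ℕ → R) {n : ℕ}
    (hn : n ≠ 0) : toArithmeticFunction f n = f n := by
  simp [toArithmeticFunction, hn]

lemma IsMultFn.isMultiplicative {f : ℕ → ℂ} (hf : IsMultFn f) :
    (toArithmeticFunction f).IsMultiplicative := by
  refine ArithmeticFunction.IsMultiplicative.iff_ne_zero.mpr ⟨?_, fun hm hn hmn ↦ ?_⟩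
  · rw [toArithmeticFunction_apply_of_ne_zero f one_ne_zero, hf.1]
  · simp only [toArithmeticFunction_apply_of_ne_zero f, hm, hn, mul_ne_zero, ne_eq,
      not_false_eq_true, hf.2 _ _ hmn]

theorem IsMO.not_summable_norm_primePow {f : ℕ → ℂ} (hf : IsMO f) :
    ¬ Summable fun q : {n : ℕ // IsPrimePow n} ↦ ‖f q‖ := by
  intro hsum
  obtain ⟨hmult, hzero, hlocal⟩ := hf
  have hFmult := hmult.isMultiplicative
  set F := toArithmeticFunction f
  have hF {n : ℕ} (hn : n ≠ 0) : F n = f n := toArithmeticFunction_apply_of_ne_zero f hn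
  have hFsum : Summable fun q : {n : ℕ // IsPrimePow n} ↦ ‖F q‖ :=
    hsum.congr fun q ↦ by rw [hF q.2.ne_zero]
  refine tsum_ne_zero_of_summable_norm_primePow hFmult hFsum (fun p ↦ ?_) ?_
  · obtain ⟨L, hL, hfL⟩ := hlocal p p.2
    have hpow (k : ℕ) : F (p ^ k) = f (p ^ k) := hF (pow_ne_zero k p.2.ne_zero)
    have hpsum := summable_pow_of_summable_primePow hFsum.of_norm p
    simp only [hpow] at hpsum ⊢
    rwa [hfL.tsum_eq hpsum]
  · have hsumF : Summable F := (summable_norm_of_summable_norm_primePow hFmult hFsum).of_norm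
    have hsucc (n : ℕ) : F (n + 1) = f (n + 1) := hF n.succ_ne_zero
    have hsumf := (summable_nat_add_iff 1).mpr hsumF
    simp only [hsucc] at hsumf
    simp only [hsumF.tsum_eq_zero_add, hsucc, hzero.tsum_eq hsumf, F.map_zero, add_zero]

end MO

theorem stmt5 (f : ℕ → ℂ) (hf : IsMO f) :
    ∀ ε : ℝ, 0 < ε →
      ¬ ∃ C : ℝ, ∀ᶠ x : ℝ in Filter.atTop,
        ‖∑ n ∈ Finset.Icc 1 ⌊x⌋₊, f n‖ ≤ C / (x * Real.log x ^ ε) := by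
  rintro ε hε ⟨C, hC⟩
  have hdecay : f =O[cofinite] fun n ↦ ((n : ℝ) * Real.log n ^ ε)⁻¹ :=
    Nat.cofinite_eq_atTop ▸ isBigO_inv_mul_log_rpow_of_norm_sum_le hC
  exact hf.not_summable_norm_primePow <| summable_of_isBigO (summable_primePow_inv_mul_log_rpow hε)
    (hdecay.comp_tendsto Subtype.val_injective.tendsto_cofinite).norm_left
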